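/- The set of zeros of the entire function f₂(s) in the right half-plane Re(s) > 0 is finite. In particular, the set of zeros of f₂ with Re(s) ≥ 1/2 is finite. -/

import Mathlib

open Complex

noncomputable def chi (s : ℂ) : ℂ := s * (s - 1) * completedRiemannZeta₀ s + 1

noncomputable def A : ℂ := Real.pi / 3 - 1

noncomputable def f1 (s : ℂ) : ℂ :=
  (s - 1) * ((s - 1) * (3 * s - 2) * (A * s - A + 1) * chi (s + 1) * chi (3 * s)
    - (s + 1) * (s - 2) * chi s * chi (3 * s - 1)
    - 2 * (s - 1) * (s - 2) * chi s * chi (3 * s))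

noncomputable def f2 (s : ℂ) : ℂ :=
  (s - 2) * ((A * s + 3) * (s - 1) ^ 2 * chi (s + 2)
    - 2 * (s - 1) * (s - 3) * chi (s + 1)
    - (s + 2) * (s - 3) * chi s)

noncomputable def Z1 (s : ℂ) : ℂ := chi (2 * s) * f1 s - chi (2 * s - 1) * f1 (1 - s)

noncomputable def Z2 (s : ℂ) : ℂ := chi (2 * s) * f2 s - chi (2 * s - 1) * f2 (1 - s)

/-!
The term `(A s + 3) (s - 1)² χ(s + 2)` dominates `f₂` at infinity in `Re s > 0`. Indeed
`χ(s) = s Γℝ(s) ζ₁(s)` with `ζ₁(s) = (s - 1) ζ(s)`. Beta integrals show that raising the real part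
of the argument by an amount in `[1, 2]` decreases `|Γℝ|` by at most a constant factor, while
`|ζ(s + 2)|` is bounded below and `ζ₁(s) = o(s²)` on `Re s ≥ 1/2`, because `ζ₁ - 1` is `s - 1` times
the series of differences between `n^{-s}` and `∫ x^{-s}` over `[n, n + 1]`. With the functional
equation `χ(s) = χ(1 - s)` covering `0 < Re s < 1/2`, this makes both `χ(s)` and `χ(s + 1)` equal to
`o(s χ(s + 2))`. Hence the zeros of `f₂` in `Re s > 0` form a bounded set, which is finite because
`f₂` is entire and `f₂(1) ≠ 0`.
-/

open Filter Asymptotics Bornology MeasureTheory ProbabilityTheory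
open scoped Real Topology ComplexConjugate

section Analytic

lemma finite_zeros_of_eventually_ne_zero {𝕜 E : Type*} [NontriviallyNormedField 𝕜]
    [ProperSpace 𝕜] [ConnectedSpace 𝕜] [NormedAddCommGroup E] [NormedSpace 𝕜 E] {f : 𝕜 → E}
    (hf : AnalyticOnNhd 𝕜 f Set.univ) {x : 𝕜} (hx : f x ≠ 0) {S : Set 𝕜}
    (hS : ∀ᶠ s in cobounded 𝕜 ⊓ 𝓟 S, f s ≠ 0) : {s | s ∈ S ∧ f s = 0}.Finite := by
  obtain ⟨R, hR⟩ := hasBasis_cobounded_norm.eventually_iff.1 (eventually_inf_principal.1 hS)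
  have hfin : (Metric.closedBall 0 R \ f ⁻¹' {0}ᶜ).Finite :=
    (isCompact_closedBall 0 R).finite_sdiff_of_mem_codiscreteWithin <|
      codiscreteWithin_mono (Set.subset_univ _) (hf.preimage_zero_mem_codiscrete hx)
  refine hfin.subset fun s ⟨hsS, hs⟩ ↦ ⟨?_, by simpa using hs⟩
  by_contra hsR
  exact hR.2 (by simpa using (not_le.1 (mt mem_closedBall_zero_iff.2 hsR)).le) hsS hs

lemma isTheta_mul_add_const_cobounded {𝕜 : Type*} [NormedField 𝕜] {a : 𝕜} (ha : a ≠ 0) (b : 𝕜) :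
    (fun s ↦ a * s + b) =Θ[cobounded 𝕜] id :=
  ((isTheta_const_mul_left ha).2 isTheta_rfl).add_isLittleO (isLittleO_const_id_cobounded b)

lemma isTheta_add_const_cobounded {𝕜 : Type*} [NormedField 𝕜] (b : 𝕜) :
    (fun s ↦ s + b) =Θ[cobounded 𝕜] id := by
  simpa only [one_mul] using isTheta_mul_add_const_cobounded one_ne_zero b

lemma isTheta_sub_const_cobounded {𝕜 : Type*} [NormedField 𝕜] (b : 𝕜) :
    (fun s ↦ s - b) =Θ[cobounded 𝕜] id := by
  simpa only [sub_eq_add_neg] using isTheta_add_const_cobounded (-b)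

lemma isLittleO_norm_rpow_cobounded {E : Type*} [NormedAddCommGroup E] {θ : ℝ} (hθ : θ < 1) :
    (fun x : E ↦ ‖x‖ ^ θ) =o[cobounded E] id := by
  have hreal : (fun x : ℝ ↦ x ^ θ) =o[atTop] fun x ↦ x := by
    refine .of_tendsto_div_atTop ((tendsto_rpow_atTop (sub_pos.2 hθ)).congr' ?_)
    filter_upwards [eventually_gt_atTop 0] with x hx
    rw [Real.rpow_sub hx, Real.rpow_one]
  exact isLittleO_norm_right.1 (hreal.comp_tendsto tendsto_norm_cobounded_atTop)

lemma le_rpow_mul_rpow {x a b θ : ℝ} (hx : 0 ≤ x) (hxa : x ≤ a) (hxb : x ≤ b)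
    (hθ₀ : 0 ≤ θ) (hθ₁ : θ ≤ 1) : x ≤ a ^ (1 - θ) * b ^ θ :=
  have ha : 0 ≤ a := hx.trans hxa
  have hθ : 0 ≤ 1 - θ := sub_nonneg.2 hθ₁
  calc x = x ^ (1 - θ) * x ^ θ := by rw [← Real.rpow_add_of_nonneg hx hθ hθ₀]; simp
    _ ≤ a ^ (1 - θ) * b ^ θ := by gcongr

end Analytic

section Zeta

lemma norm_ofReal_cpow_neg_sub_le {m x : ℝ} {s : ℂ} (hm : 0 < m) (hmx : m ≤ x)
    (hs : 0 ≤ s.re) :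
    ‖(m : ℂ) ^ (-s) - (x : ℂ) ^ (-s)‖ ≤ ‖s‖ * m ^ (-s.re - 1) * (x - m) := by
  have hderiv (y : ℝ) (hy : y ∈ Set.Icc m x) : HasDerivWithinAt (fun y : ℝ ↦ (y : ℂ) ^ (-s))
      (-s * (y : ℂ) ^ (-s - 1) * 1) (Set.Icc m x) y :=
    ((hasDerivAt_id (y : ℂ)).cpow_const
      (ofReal_mem_slitPlane.2 (hm.trans_le hy.1))).comp_ofReal.hasDerivWithinAt
  have hbound (y : ℝ) (hy : y ∈ Set.Ico m x) :
      ‖-s * (y : ℂ) ^ (-s - 1) * 1‖ ≤ ‖s‖ * m ^ (-s.re - 1) := by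
    rw [mul_one, norm_mul, norm_neg, norm_cpow_eq_rpow_re_of_pos (hm.trans_le hy.1)]
    gcongr
    exact Real.rpow_le_rpow_of_nonpos hm hy.1 (by simp only [sub_re, neg_re, one_re]; linarith)
  rw [norm_sub_rev]
  exact norm_image_sub_le_of_norm_deriv_le_segment' hderiv hbound x (Set.right_mem_Icc.2 hmx)

/- The mean value bound alone (`θ = 1`) would only give `ζ₁ s = O(s ^ 2)` below; interpolating it
with the triangle inequality trades excess decay in `m` for a smaller power of `‖s‖`. -/
lemma norm_ofReal_cpow_neg_sub_le_rpow {m x θ : ℝ} {s : ℂ} (hm : 0 < m)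
    (hx : x ∈ Set.Icc m (m + 1)) (hs : 0 ≤ s.re) (hθ₀ : 0 ≤ θ) (hθ₁ : θ ≤ 1) :
    ‖(m : ℂ) ^ (-s) - (x : ℂ) ^ (-s)‖ ≤ 2 * ‖s‖ ^ θ * m ^ (-(s.re + θ)) := by
  have htriangle : ‖(m : ℂ) ^ (-s) - (x : ℂ) ^ (-s)‖ ≤ 2 * m ^ (-s.re) := by
    refine (norm_sub_le _ _).trans ?_
    rw [norm_cpow_eq_rpow_re_of_pos hm, norm_cpow_eq_rpow_re_of_pos (hm.trans_le hx.1), neg_re,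
      two_mul]
    exact add_le_add_right (Real.rpow_le_rpow_of_nonpos hm hx.1 (neg_nonpos.2 hs)) _
  have hmean : ‖(m : ℂ) ^ (-s) - (x : ℂ) ^ (-s)‖ ≤ ‖s‖ * m ^ (-s.re - 1) :=
    (norm_ofReal_cpow_neg_sub_le hm hx.1 hs).trans
      (mul_le_of_le_one_right (by positivity) (sub_le_iff_le_add'.2 hx.2))
  calc ‖(m : ℂ) ^ (-s) - (x : ℂ) ^ (-s)‖
      ≤ (2 * m ^ (-s.re)) ^ (1 - θ) * (‖s‖ * m ^ (-s.re - 1)) ^ θ :=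
        le_rpow_mul_rpow (norm_nonneg _) htriangle hmean hθ₀ hθ₁
    _ = 2 ^ (1 - θ) * ‖s‖ ^ θ * m ^ (-(s.re + θ)) := by
        rw [Real.mul_rpow (by positivity) (by positivity),
          Real.mul_rpow (by positivity) (by positivity), ← Real.rpow_mul hm.le,
          ← Real.rpow_mul hm.le, mul_mul_mul_comm, ← Real.rpow_add hm]
        ring_nf
    _ ≤ 2 * ‖s‖ ^ θ * m ^ (-(s.re + θ)) := by
        gcongr
        exact Real.rpow_le_self_of_one_le one_le_two (by linarith)

/-- The terms of the series `∑ zetaOneTerm n s = riemannZeta₁ s - 1`, obtained by comparing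
`∑ (n + 1) ^ (-s)` with `∫ x ^ (-s)` on each `[n + 1, n + 2]` and multiplying by `s - 1`. The
integral is written in closed form, which makes it apparent that each term is entire. -/
noncomputable def zetaOneTerm (n : ℕ) (s : ℂ) : ℂ :=
  (s - 1) * ((n : ℂ) + 1) ^ (-s) - (((n : ℂ) + 1) ^ (1 - s) - ((n : ℂ) + 2) ^ (1 - s))

lemma differentiable_zetaOneTerm (n : ℕ) : Differentiable ℂ (zetaOneTerm n) := by
  have h₁ : (n : ℂ) + 1 ≠ 0 := by exact_mod_cast n.succ_ne_zero
  have h₂ : (n : ℂ) + 2 ≠ 0 := by exact_mod_cast (n + 1).succ_ne_zero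
  unfold zetaOneTerm
  fun_prop (disch := simp [h₁, h₂])

lemma zetaOneTerm_eq_mul_integral (n : ℕ) (s : ℂ) :
    zetaOneTerm n s =
      (s - 1) * ∫ x in (n + 1 : ℝ)..(n + 2 : ℝ), (((n + 1 : ℝ) : ℂ) ^ (-s) - (x : ℂ) ^ (-s)) := by
  have hpos : (0 : ℝ) ∉ Set.uIcc (n + 1 : ℝ) (n + 2) := by
    rw [Set.uIcc_of_le (by linarith), Set.mem_Icc]
    intro h
    linarith [h.1, (Nat.cast_nonneg n : (0 : ℝ) ≤ n)]
  rcases eq_or_ne s 1 with rfl | hs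
  · simp [zetaOneTerm]
  have hs' : 1 - s ≠ 0 := sub_ne_zero.2 hs.symm
  rw [intervalIntegral.integral_sub intervalIntegrable_const
      (intervalIntegral.intervalIntegrable_cpow (.inr hpos)),
    integral_cpow (.inr ⟨by simpa using hs, hpos⟩), zetaOneTerm, neg_add_eq_sub]
  simp only [intervalIntegral.integral_const, add_sub_add_left_eq_sub, real_smul]
  push_cast
  field_simp
  ring

lemma norm_zetaOneTerm_le (n : ℕ) {σ θ : ℝ} {s : ℂ} (hσ : 0 ≤ σ) (hs : σ ≤ s.re) (hθ₀ : 0 ≤ θ)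
    (hθ₁ : θ ≤ 1) :
    ‖zetaOneTerm n s‖ ≤ ‖s - 1‖ * (2 * ‖s‖ ^ θ) * ((n : ℝ) + 1) ^ (-(σ + θ)) := by
  have hintegrand (x : ℝ) (hx : x ∈ Set.uIoc (n + 1 : ℝ) (n + 2)) :
      ‖((n + 1 : ℝ) : ℂ) ^ (-s) - (x : ℂ) ^ (-s)‖ ≤
        2 * ‖s‖ ^ θ * ((n : ℝ) + 1) ^ (-(σ + θ)) := by
    rw [Set.uIoc_of_le (by linarith)] at hx
    refine (norm_ofReal_cpow_neg_sub_le_rpow (by positivity) ⟨hx.1.le, by linarith [hx.2]⟩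
      (hσ.trans hs) hθ₀ hθ₁).trans ?_
    gcongr
    simp
  rw [zetaOneTerm_eq_mul_integral, norm_mul, mul_assoc]
  gcongr
  refine (intervalIntegral.norm_integral_le_of_norm_le_const hintegrand).trans_eq ?_
  rw [add_sub_add_left_eq_sub]
  norm_num

lemma summable_add_one_rpow_neg {p : ℝ} (hp : 1 < p) :
    Summable fun n : ℕ ↦ ((n : ℝ) + 1) ^ (-p) := by
  simpa using (summable_nat_add_iff 1).2 (Real.summable_nat_rpow.2 (neg_lt_neg hp))

lemma summable_zetaOneTerm {s : ℂ} (hs : 0 < s.re) : Summable fun n ↦ zetaOneTerm n s :=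
  .of_norm_bounded ((summable_add_one_rpow_neg (by linarith)).mul_left _)
    fun n ↦ norm_zetaOneTerm_le n hs.le le_rfl zero_le_one le_rfl

lemma sum_range_zetaOneTerm (N : ℕ) (s : ℂ) :
    ∑ n ∈ Finset.range N, zetaOneTerm n s =
      (s - 1) * ∑ n ∈ Finset.range N, ((n : ℂ) + 1) ^ (-s) - 1 + ((N : ℂ) + 1) ^ (1 - s) := by
  induction N with
  | zero => simp
  | succ N ih =>
    rw [Finset.sum_range_succ, ih, Finset.sum_range_succ, zetaOneTerm]
    push_cast
    ring_nf

lemma riemannZeta₁_eq_sub_one_mul {s : ℂ} (hs : s ≠ 1) :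
    riemannZeta₁ s = (s - 1) * riemannZeta s := by
  rw [riemannZeta_eq_inv_sub_mul hs, mul_inv_cancel_left₀ (sub_ne_zero.2 hs)]

lemma tendsto_add_one_cpow_one_sub {s : ℂ} (hs : 1 < s.re) :
    Tendsto (fun N : ℕ ↦ ((N : ℂ) + 1) ^ (1 - s)) atTop (𝓝 0) := by
  rw [tendsto_zero_iff_norm_tendsto_zero]
  have hreal : Tendsto (fun N : ℕ ↦ ((N + 1 : ℕ) : ℝ) ^ (-(s.re - 1))) atTop (𝓝 0) :=
    ((tendsto_rpow_neg_atTop (sub_pos.2 hs)).comp tendsto_natCast_atTop_atTop).comp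
      (tendsto_add_atTop_nat 1)
  refine hreal.congr fun N ↦ ?_
  rw [← Nat.cast_add_one, norm_natCast_cpow_of_pos N.succ_pos]
  simp

lemma hasSum_add_one_cpow_neg {s : ℂ} (hs : 1 < s.re) :
    HasSum (fun n : ℕ ↦ ((n : ℂ) + 1) ^ (-s)) (riemannZeta s) := by
  have hsum : Summable fun n : ℕ ↦ ((n : ℂ) + 1) ^ (-s) := by
    simpa [cpow_neg] using (summable_nat_add_iff 1).2 (summable_one_div_nat_cpow.2 hs)
  simpa [zeta_eq_tsum_one_div_nat_add_one_cpow hs, cpow_neg] using hsum.hasSum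

lemma tsum_zetaOneTerm_of_one_lt_re {s : ℂ} (hs : 1 < s.re) :
    ∑' n, zetaOneTerm n s = riemannZeta₁ s - 1 := by
  have hlim : Tendsto (fun N ↦ ∑ n ∈ Finset.range N, zetaOneTerm n s) atTop
      (𝓝 ((s - 1) * riemannZeta s - 1 + 0)) := by
    simp only [sum_range_zetaOneTerm]
    exact (((hasSum_add_one_cpow_neg hs).tendsto_sum_nat.const_mul _).sub_const 1).add
      (tendsto_add_one_cpow_one_sub hs)
  rw [riemannZeta₁_eq_sub_one_mul (by rintro rfl; simp at hs), ← add_zero (_ - 1)]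
  exact tendsto_nhds_unique (summable_zetaOneTerm (by linarith)).hasSum.tendsto_sum_nat hlim

lemma differentiableAt_tsum_zetaOneTerm {s : ℂ} (hs : 0 < s.re) :
    DifferentiableAt ℂ (fun s ↦ ∑' n, zetaOneTerm n s) s := by
  let U : Set ℂ := {w | s.re / 2 < w.re} ∩ Metric.ball 0 (‖s‖ + 1)
  have hU : IsOpen U := (isOpen_lt continuous_const continuous_re).inter Metric.isOpen_ball
  have hsU : s ∈ U := ⟨half_lt_self hs, by simp⟩
  have hbound (n : ℕ) (w : ℂ) (hw : w ∈ U) : ‖zetaOneTerm n w‖ ≤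
      (‖s‖ + 1 + 1) * (2 * (‖s‖ + 1) ^ (1 : ℝ)) * ((n : ℝ) + 1) ^ (-(s.re / 2 + 1)) := by
    have hw_norm : ‖w‖ ≤ ‖s‖ + 1 := (mem_ball_zero_iff.1 hw.2).le
    have hw_sub : ‖w - 1‖ ≤ ‖s‖ + 1 + 1 :=
      (norm_sub_le _ _).trans (by rw [norm_one]; gcongr)
    refine (norm_zetaOneTerm_le n (half_pos hs).le hw.1.le zero_le_one le_rfl).trans ?_
    gcongr
  exact (differentiableOn_tsum_of_summable_norm
    ((summable_add_one_rpow_neg (by linarith)).mul_left _)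
    (fun n ↦ (differentiable_zetaOneTerm n).differentiableOn) hU hbound).differentiableAt
    (hU.mem_nhds hsU)

lemma tsum_zetaOneTerm {s : ℂ} (hs : 0 < s.re) :
    ∑' n, zetaOneTerm n s = riemannZeta₁ s - 1 := by
  have hopen : IsOpen {s : ℂ | 0 < s.re} := isOpen_lt continuous_const continuous_re
  have hseries : AnalyticOnNhd ℂ (fun s ↦ ∑' n, zetaOneTerm n s) {s | 0 < s.re} :=
    DifferentiableOn.analyticOnNhd
      (fun s hs ↦ (differentiableAt_tsum_zetaOneTerm hs).differentiableWithinAt) hopen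
  have hzeta : AnalyticOnNhd ℂ (fun s ↦ riemannZeta₁ s - 1) {s | 0 < s.re} :=
    (differentiable_riemannZeta₁.sub_const 1).differentiableOn.analyticOnNhd hopen
  have heq : ∀ᶠ s in 𝓝 (2 : ℂ), ∑' n, zetaOneTerm n s = riemannZeta₁ s - 1 := by
    filter_upwards [(isOpen_lt continuous_const continuous_re).mem_nhds
      (show (1 : ℝ) < (2 : ℂ).re by simp)] with s hs
    exact tsum_zetaOneTerm_of_one_lt_re hs
  exact hseries.eqOn_of_preconnected_of_eventuallyEq hzeta (convex_halfSpace_re_gt 0).isPreconnected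
    (show (0 : ℝ) < (2 : ℂ).re by simp) heq hs

lemma norm_riemannZeta₁_sub_one_le {σ θ : ℝ} {s : ℂ} (hσ : 0 < σ) (hs : σ ≤ s.re) (hθ₀ : 0 ≤ θ)
    (hθ₁ : θ ≤ 1) (hσθ : 1 < σ + θ) :
    ‖riemannZeta₁ s - 1‖ ≤
      ‖s - 1‖ * (2 * ‖s‖ ^ θ) * ∑' n : ℕ, ((n : ℝ) + 1) ^ (-(σ + θ)) := by
  rw [← tsum_zetaOneTerm (hσ.trans_le hs)]
  exact tsum_of_norm_bounded ((summable_add_one_rpow_neg hσθ).hasSum.mul_left _)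
    fun n ↦ norm_zetaOneTerm_le n hσ.le hs hθ₀ hθ₁

lemma riemannZeta₁_isLittleO_sq :
    riemannZeta₁ =o[cobounded ℂ ⊓ 𝓟 {s | 1 / 2 ≤ s.re}] fun s ↦ s ^ 2 := by
  set l := cobounded ℂ ⊓ 𝓟 {s : ℂ | 1 / 2 ≤ s.re}
  have hl : l ≤ cobounded ℂ := inf_le_left
  have hbound : (fun s ↦ riemannZeta₁ s - 1) =O[l] fun s ↦ (s - 1) * (‖s‖ ^ (3 / 4 : ℝ) : ℝ) := by
    refine .of_bound (2 * ∑' n : ℕ, ((n : ℝ) + 1) ^ (-(1 / 2 + 3 / 4 : ℝ))) ?_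
    filter_upwards [mem_inf_of_right (mem_principal_self _)] with s hs
    refine (norm_riemannZeta₁_sub_one_le (θ := 3 / 4) (by norm_num) hs (by norm_num)
      (by norm_num) (by norm_num)).trans_eq ?_
    rw [norm_mul, norm_real, Real.norm_of_nonneg (by positivity)]
    ring
  have hpow : (fun s : ℂ ↦ ((‖s‖ ^ (3 / 4 : ℝ) : ℝ) : ℂ)) =o[l] id :=
    isLittleO_ofReal_left.2 ((isLittleO_norm_rpow_cobounded (by norm_num)).mono hl)
  have hsub : (fun s ↦ riemannZeta₁ s - 1) =o[l] fun s ↦ s ^ 2 := by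
    simpa only [id, sq] using
      hbound.trans_isLittleO (((isTheta_sub_const_cobounded 1).isBigO.mono hl).mul_isLittleO hpow)
  have hone : (fun _ : ℂ ↦ (1 : ℂ)) =o[l] fun s ↦ s ^ 2 := by
    simpa using (isLittleO_pow_pow_cobounded_of_lt (R := ℂ) zero_lt_two).mono hl
  simpa using hsub.add hone

lemma norm_riemannZeta_sub_one_le {s : ℂ} (hs : 2 ≤ s.re) :
    ‖riemannZeta s - 1‖ ≤ π ^ 2 / 6 - 1 := by
  have htail : HasSum (fun n : ℕ ↦ ((n + 1 : ℕ) + 1 : ℂ) ^ (-s)) (riemannZeta s - 1) := by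
    simpa using (hasSum_nat_add_iff' 1).2 (hasSum_add_one_cpow_neg (by linarith))
  have htail_two : HasSum (fun n : ℕ ↦ 1 / ((n + 2 : ℕ) : ℝ) ^ 2) (π ^ 2 / 6 - 1) := by
    simpa [Finset.sum_range_succ] using (hasSum_nat_add_iff' 2).2 hasSum_zeta_two
  refine htail.norm_le_of_bounded htail_two fun n ↦ ?_
  rw [← Nat.cast_add_one, norm_natCast_cpow_of_pos (by positivity), one_div,
    ← Real.rpow_natCast, ← Real.rpow_neg (by positivity)]
  exact Real.rpow_le_rpow_of_exponent_le (by norm_cast; lia) (by simpa using hs)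

lemma one_fourth_le_norm_riemannZeta {s : ℂ} (hs : 2 ≤ s.re) : 1 / 4 ≤ ‖riemannZeta s‖ := by
  have htriangle : 1 - ‖riemannZeta s‖ ≤ ‖riemannZeta s - 1‖ := by
    simpa [norm_sub_rev] using norm_sub_norm_le 1 (riemannZeta s)
  have hpi : π ^ 2 / 6 ≤ 7 / 4 := by nlinarith [Real.pi_lt_d2, Real.pi_pos]
  linarith [norm_riemannZeta_sub_one_le hs]

end Zeta

section Gamma

lemma betaIntegrand_ofReal (a b : ℝ) {x : ℝ} (hx : x ∈ Set.Icc 0 1) :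
    (x : ℂ) ^ ((a : ℂ) - 1) * (1 - (x : ℂ)) ^ ((b : ℂ) - 1) =
      ((x ^ (a - 1) * (1 - x) ^ (b - 1) : ℝ) : ℂ) := by
  simp [ofReal_cpow hx.1, ofReal_cpow (sub_nonneg.2 hx.2)]

lemma beta_eq_integral {a b : ℝ} (ha : 0 < a) (hb : 0 < b) :
    beta a b = ∫ x in (0 : ℝ)..1, x ^ (a - 1) * (1 - x) ^ (b - 1) := by
  have hofReal : betaIntegral a b =
      ((∫ x in (0 : ℝ)..1, x ^ (a - 1) * (1 - x) ^ (b - 1) : ℝ) : ℂ) := by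
    rw [← intervalIntegral.integral_ofReal, betaIntegral]
    refine intervalIntegral.integral_congr fun x hx ↦ betaIntegrand_ofReal a b ?_
    rwa [Set.uIcc_of_le zero_le_one] at hx
  rw [beta_eq_betaIntegralReal a b ha hb, hofReal, ofReal_re]

lemma intervalIntegrable_betaIntegrand {a b : ℝ} (ha : 0 < a) (hb : 0 < b) :
    IntervalIntegrable (fun x : ℝ ↦ x ^ (a - 1) * (1 - x) ^ (b - 1)) volume 0 1 := by
  refine (betaIntegral_convergent (u := a) (v := b) ha hb).norm.congr fun x hx ↦ ?_
  rw [Set.uIoc_of_le zero_le_one] at hx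
  have hx_le : 0 ≤ 1 - x := sub_nonneg.2 hx.2
  have hx_pos : 0 ≤ x := hx.1.le
  simp only [betaIntegrand_ofReal a b ⟨hx_pos, hx.2⟩, norm_real]
  exact Real.norm_of_nonneg (by positivity)

lemma norm_betaIntegral_le_beta {a b : ℝ} {u v : ℂ} (ha : 0 < a) (hu : a ≤ u.re) (hb : 0 < b)
    (hv : b ≤ v.re) : ‖betaIntegral u v‖ ≤ beta a b := by
  rw [beta_eq_integral ha hb]
  refine intervalIntegral.norm_integral_le_of_norm_le zero_le_one ?_
    (intervalIntegrable_betaIntegrand ha hb)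
  filter_upwards [Measure.ae_ne volume 1] with x hx1 hx
  have hx_pos : 0 < x := hx.1
  have hx_lt : 0 < 1 - x := sub_pos.2 (lt_of_le_of_ne hx.2 hx1)
  rw [norm_mul, ← ofReal_one, ← ofReal_sub, norm_cpow_eq_rpow_re_of_pos hx_pos,
    norm_cpow_eq_rpow_re_of_pos hx_lt]
  gcongr ?_ * ?_
  · exact Real.rpow_le_rpow_of_exponent_ge hx_pos hx.2 (by simpa using hu)
  · exact Real.rpow_le_rpow_of_exponent_ge hx_lt (sub_le_self 1 hx_pos.le) (by simpa using hv)

lemma one_le_Gamma_of_le_one {x : ℝ} (hx₀ : 0 < x) (hx₁ : x ≤ 1) : 1 ≤ Real.Gamma x := by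
  rcases hx₁.eq_or_lt with rfl | hx₁
  · exact Real.Gamma_one.ge
  have hright : Real.Gamma 2 ≤ Real.Gamma 1 := by rw [Real.Gamma_one, Real.Gamma_two]
  simpa using Real.convexOn_Gamma.le_left_of_right_le'' hx₀ (Set.mem_Ioi.2 two_pos) hx₁.le
    one_lt_two hright

lemma norm_Gamma_le_beta_mul {a b : ℝ} {w z : ℂ} (ha : 0 < a) (hw : a ≤ w.re) (hb : 0 < b)
    (hzw : z.re - w.re ∈ Set.Icc b 1) (him : z.im = w.im) :
    ‖Gamma w‖ ≤ beta a b * ‖Gamma z‖ := by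
  set d := z.re - w.re
  have hd : 0 < d := hb.trans_le hzw.1
  have hz : w + d = z := by apply Complex.ext <;> simp [d, him]
  have hGamma : 1 ≤ ‖Gamma d‖ := by
    rw [Gamma_ofReal, norm_real]
    exact (one_le_Gamma_of_le_one hd hzw.2).trans (le_abs_self _)
  calc ‖Gamma w‖ ≤ ‖Gamma w‖ * ‖Gamma d‖ := le_mul_of_one_le_right (norm_nonneg _) hGamma
    _ = ‖Gamma z‖ * ‖betaIntegral w d‖ := by
        rw [← norm_mul, ← norm_mul, Gamma_mul_Gamma_eq_betaIntegral (ha.trans_le hw)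
          (by simpa using hd), hz]
    _ ≤ ‖Gamma z‖ * beta a b := by
        gcongr
        exact norm_betaIntegral_le_beta ha hw hb (by simpa using hzw.1)
    _ = beta a b * ‖Gamma z‖ := mul_comm _ _

lemma norm_Gammaℝ (s : ℂ) : ‖Gammaℝ s‖ = π ^ (-(s.re / 2)) * ‖Gamma (s / 2)‖ := by
  rw [Gammaℝ_def, norm_mul, norm_cpow_eq_rpow_re_of_pos Real.pi_pos]
  simp [neg_div]

lemma norm_Gammaℝ_conj (s : ℂ) : ‖Gammaℝ (conj s)‖ = ‖Gammaℝ s‖ := by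
  have hconj : conj s / 2 = conj (s / 2) := by rw [map_div₀, conj_ofNat]
  rw [norm_Gammaℝ, norm_Gammaℝ, hconj, Gamma_conj, norm_conj, conj_re]

lemma norm_Gammaℝ_le_beta_mul {a b : ℝ} {w z : ℂ} (ha : 0 < a) (hw : a ≤ w.re) (hb : 0 < b)
    (hzw : z.re - w.re ∈ Set.Icc b 2) (him : z.im = w.im) :
    ‖Gammaℝ w‖ ≤ π * beta (a / 2) (b / 2) * ‖Gammaℝ z‖ := by
  have hpi : π ^ (-(w.re / 2)) ≤ π * π ^ (-(z.re / 2)) := by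
    nth_rw 2 [← Real.rpow_one π]
    rw [← Real.rpow_add Real.pi_pos]
    exact Real.rpow_le_rpow_of_exponent_le (by linarith [Real.pi_gt_three]) (by linarith [hzw.2])
  have hGamma : ‖Gamma (w / 2)‖ ≤ beta (a / 2) (b / 2) * ‖Gamma (z / 2)‖ :=
    norm_Gamma_le_beta_mul (half_pos ha) (by simpa using by linarith) (half_pos hb)
      ⟨by simp only [div_ofNat_re]; linarith [hzw.1],
        by simp only [div_ofNat_re]; linarith [hzw.2]⟩ (by simp [him])
  calc ‖Gammaℝ w‖
      ≤ (π * π ^ (-(z.re / 2))) * (beta (a / 2) (b / 2) * ‖Gamma (z / 2)‖) := by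
        rw [norm_Gammaℝ]
        gcongr
    _ = π * beta (a / 2) (b / 2) * ‖Gammaℝ z‖ := by
        rw [norm_Gammaℝ]
        ring

lemma norm_Gammaℝ_le_beta_mul_of_abs_im_eq {a b : ℝ} {w z : ℂ} (ha : 0 < a) (hw : a ≤ w.re)
    (hb : 0 < b) (hzw : z.re - w.re ∈ Set.Icc b 2) (him : |z.im| = |w.im|) :
    ‖Gammaℝ w‖ ≤ π * beta (a / 2) (b / 2) * ‖Gammaℝ z‖ := by
  rcases abs_eq_abs.1 him with him | him
  · exact norm_Gammaℝ_le_beta_mul ha hw hb hzw him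
  · rw [← norm_Gammaℝ_conj z]
    exact norm_Gammaℝ_le_beta_mul ha hw hb (by simpa using hzw) (by simp [him])

end Gamma

section Chi

lemma differentiable_chi : Differentiable ℂ chi := by
  have := differentiable_completedZeta₀
  unfold chi
  fun_prop

lemma chi_one_sub (s : ℂ) : chi (1 - s) = chi s := by
  rw [chi, chi, completedRiemannZeta₀_one_sub]
  ring

lemma chi_eq_mul_riemannZeta₁ {s : ℂ} (hs : 0 < s.re) :
    chi s = s * Gammaℝ s * riemannZeta₁ s := by
  rcases eq_or_ne s 1 with rfl | hs₁
  · simp [chi]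
  have hs₀ : s ≠ 0 := ne_zero_of_re_pos hs
  have hGamma : Gammaℝ s ≠ 0 := Gammaℝ_ne_zero_of_re_pos hs
  have hs₁' : 1 - s ≠ 0 := sub_ne_zero.2 hs₁.symm
  rw [riemannZeta₁_eq_sub_one_mul hs₁, riemannZeta_def_of_ne_zero hs₀, completedRiemannZeta_eq, chi]
  field_simp
  ring

lemma chi_eq_mul_riemannZeta {s : ℂ} (hs : 1 < s.re) :
    chi s = s * (s - 1) * Gammaℝ s * riemannZeta s := by
  rw [chi_eq_mul_riemannZeta₁ (by linarith),
    riemannZeta₁_eq_sub_one_mul (by rintro rfl; simp at hs)]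
  ring

lemma chi_ne_zero {s : ℂ} (hs : 1 < s.re) : chi s ≠ 0 := by
  rw [chi_eq_mul_riemannZeta hs]
  have hs₀ : 0 < s.re := by linarith
  have hs₁ : s - 1 ≠ 0 := ne_zero_of_re_pos (by simpa using hs)
  simp [ne_zero_of_re_pos hs₀, hs₁, Gammaℝ_ne_zero_of_re_pos hs₀,
    riemannZeta_ne_zero_of_one_le_re hs.le]

lemma chi_isLittleO_cube_mul_Gammaℝ :
    chi =o[cobounded ℂ ⊓ 𝓟 {s | 1 / 2 ≤ s.re}] fun s ↦ s ^ 3 * Gammaℝ s := by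
  refine ((isBigO_refl (fun s ↦ s * Gammaℝ s) _).mul_isLittleO riemannZeta₁_isLittleO_sq).congr'
    ?_ (.of_forall fun s ↦ by ring)
  filter_upwards [mem_inf_of_right (mem_principal_self _)] with s hs
  exact (chi_eq_mul_riemannZeta₁ (one_half_pos.trans_le hs)).symm

lemma sq_mul_Gammaℝ_isBigO_chi :
    (fun s ↦ s ^ 2 * Gammaℝ s) =O[cobounded ℂ ⊓ 𝓟 {s | 2 ≤ s.re}] chi := by
  set l := cobounded ℂ ⊓ 𝓟 {s : ℂ | 2 ≤ s.re}
  have hmem : ∀ᶠ s in l, 2 ≤ s.re := mem_inf_of_right (mem_principal_self _)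
  have hlinear : id =O[l] fun s : ℂ ↦ s - 1 :=
    (isTheta_sub_const_cobounded 1).symm.isBigO.mono inf_le_left
  have hzeta : (fun _ ↦ (1 : ℂ)) =O[l] riemannZeta := by
    refine .of_bound 4 (hmem.mono fun s hs ↦ ?_)
    rw [norm_one]
    linarith [one_fourth_le_norm_riemannZeta hs]
  refine ((((isBigO_refl id l).mul hlinear).mul (isBigO_refl Gammaℝ l)).mul hzeta).congr'
    (.of_forall fun s ↦ by simp [sq]) (hmem.mono fun s hs ↦ ?_)
  exact (chi_eq_mul_riemannZeta (one_lt_two.trans_le hs)).symm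

lemma chi_comp_isLittleO_mul_chi_add_two {l : Filter ℂ} {g : ℂ → ℂ}
    (hl : l ≤ cobounded ℂ ⊓ 𝓟 {s | 0 < s.re}) (hg : g =Θ[l] id)
    (hre : ∀ᶠ s in l, 1 / 2 ≤ (g s).re ∧ (g s).re ∈ Set.Icc s.re (s.re + 1))
    (him : ∀ s, |s.im| = |(g s).im|) :
    (fun s ↦ chi (g s)) =o[l] fun s ↦ s * chi (s + 2) := by
  have hcob : l ≤ cobounded ℂ := hl.trans inf_le_left
  have hpos : ∀ᶠ s in l, 0 < s.re := hl (mem_inf_of_right (mem_principal_self _))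
  have hadd : (fun s : ℂ ↦ s + 2) =Θ[l] id := (isTheta_add_const_cobounded 2).mono hcob
  have hg_tendsto : Tendsto g l (cobounded ℂ ⊓ 𝓟 {s | 1 / 2 ≤ s.re}) := by
    refine tendsto_inf.2 ⟨?_, tendsto_principal.2 (hre.mono fun s hs ↦ hs.1)⟩
    exact tendsto_norm_atTop_iff_cobounded.1
      (hg.tendsto_norm_atTop_iff.2 (tendsto_norm_atTop_iff_cobounded.2 hcob))
  have hadd_tendsto : Tendsto (fun s : ℂ ↦ s + 2) l (cobounded ℂ ⊓ 𝓟 {s | 2 ≤ s.re}) := by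
    refine tendsto_inf.2 ⟨(tendsto_add_const_cobounded 2).mono_left hcob, ?_⟩
    exact tendsto_principal.2 (hpos.mono fun s hs ↦ by simpa using hs.le)
  have hGamma : (fun s ↦ Gammaℝ (g s)) =O[l] fun s ↦ Gammaℝ (s + 2) := by
    refine .of_bound (π * beta (1 / 2 / 2) (1 / 2)) (hre.mono fun s ⟨hs, hs_mem⟩ ↦ ?_)
    exact norm_Gammaℝ_le_beta_mul_of_abs_im_eq one_half_pos hs one_pos
      ⟨by simp only [add_re, re_ofNat]; linarith [hs_mem.2],
        by simp only [add_re, re_ofNat]; linarith [hs_mem.1]⟩ (by simpa using him s)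
  calc (fun s ↦ chi (g s))
      =o[l] fun s ↦ g s ^ 3 * Gammaℝ (g s) := chi_isLittleO_cube_mul_Gammaℝ.comp_tendsto hg_tendsto
    _ =O[l] fun s ↦ id s ^ 3 * Gammaℝ (s + 2) := (hg.isBigO.pow 3).mul hGamma
    _ =ᶠ[l] fun s ↦ id s * (id s ^ 2 * Gammaℝ (s + 2)) := .of_forall fun s ↦ by ring
    _ =O[l] fun s ↦ id s * ((s + 2) ^ 2 * Gammaℝ (s + 2)) :=
        (isBigO_refl _ _).mul ((hadd.symm.isBigO.pow 2).mul (isBigO_refl _ _))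
    _ =O[l] fun s ↦ s * chi (s + 2) :=
        (isBigO_refl _ _).mul (sq_mul_Gammaℝ_isBigO_chi.comp_tendsto hadd_tendsto)

lemma chi_add_one_isLittleO_mul_chi_add_two :
    (fun s ↦ chi (s + 1)) =o[cobounded ℂ ⊓ 𝓟 {s | 0 < s.re}] fun s ↦ s * chi (s + 2) := by
  refine chi_comp_isLittleO_mul_chi_add_two le_rfl
    ((isTheta_add_const_cobounded 1).mono inf_le_left) ?_ (by simp)
  filter_upwards [mem_inf_of_right (mem_principal_self _)] with s (hs : 0 < s.re)
  rw [add_re, one_re]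
  exact ⟨by linarith, by linarith, le_rfl⟩

lemma chi_isLittleO_mul_chi_add_two :
    chi =o[cobounded ℂ ⊓ 𝓟 {s | 0 < s.re}] fun s ↦ s * chi (s + 2) := by
  have hright : chi =o[cobounded ℂ ⊓ 𝓟 {s | 1 / 2 ≤ s.re}] fun s ↦ s * chi (s + 2) := by
    refine chi_comp_isLittleO_mul_chi_add_two (g := id) ?_ isTheta_rfl ?_ (by simp)
    · refine inf_le_inf_left _ (principal_mono.2 fun s (hs : 1 / 2 ≤ s.re) ↦ ?_)
      exact one_half_pos.trans_le hs
    · filter_upwards [mem_inf_of_right (mem_principal_self _)] with s hs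
      exact ⟨hs, by simp⟩
  have hleft : chi =o[cobounded ℂ ⊓ 𝓟 {s | 0 < s.re ∧ s.re ≤ 1 / 2}]
      fun s ↦ s * chi (s + 2) := by
    suffices (fun s ↦ chi (1 - s)) =o[_] _ by simpa only [chi_one_sub] using this
    refine chi_comp_isLittleO_mul_chi_add_two ?_ ?_ ?_ (by simp)
    · exact inf_le_inf_left _ (principal_mono.2 fun s hs ↦ hs.1)
    · simpa only [neg_one_mul, neg_add_eq_sub] using
        (isTheta_mul_add_const_cobounded (neg_ne_zero.2 (one_ne_zero (α := ℂ))) 1).mono inf_le_left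
    · filter_upwards [mem_inf_of_right (mem_principal_self _)] with s hs
      rw [sub_re, one_re]
      exact ⟨by linarith [hs.2], by linarith [hs.2], by linarith [hs.1]⟩
  refine (hright.sup hleft).mono ?_
  rw [← inf_sup_left, sup_principal]
  refine inf_le_inf_left _ (principal_mono.2 fun s hs ↦ ?_)
  exact (le_total (1 / 2) s.re).imp id fun h ↦ ⟨hs, h⟩

end Chi

section F2

lemma differentiable_f2 : Differentiable ℂ f2 := by
  have := differentiable_chi
  unfold f2
  fun_prop

lemma f2_one : f2 1 = -6 := by
  simp only [f2, chi]
  norm_num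

lemma A_ne_zero : A ≠ 0 := by
  rw [A, sub_ne_zero]
  norm_cast
  linarith [Real.pi_gt_three]

lemma f2_isTheta :
    f2 =Θ[cobounded ℂ ⊓ 𝓟 {s | 0 < s.re}] fun s ↦ s ^ 4 * chi (s + 2) := by
  set l := cobounded ℂ ⊓ 𝓟 {s : ℂ | 0 < s.re}
  have hsub (c : ℂ) : (fun s ↦ s - c) =Θ[l] id := (isTheta_sub_const_cobounded c).mono inf_le_left
  have hadd (c : ℂ) : (fun s ↦ s + c) =Θ[l] id := (isTheta_add_const_cobounded c).mono inf_le_left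
  have hmain : (fun s ↦ (A * s + 3) * (s - 1) ^ 2 * chi (s + 2)) =Θ[l]
      fun s ↦ s ^ 3 * chi (s + 2) := by
    have hlinear : (fun s ↦ A * s + 3) =Θ[l] id :=
      (isTheta_mul_add_const_cobounded A_ne_zero 3).mono inf_le_left
    simpa only [id, ← pow_succ'] using (hlinear.mul ((hsub 1).pow 2)).mul isTheta_rfl
  have hchi_add_one : (fun s ↦ 2 * (s - 1) * (s - 3) * chi (s + 1)) =o[l]
      fun s ↦ s ^ 3 * chi (s + 2) :=
    ((((hsub 1).isBigO.const_mul_left 2).mul (hsub 3).isBigO).mul_isLittleO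
      chi_add_one_isLittleO_mul_chi_add_two).congr_right fun s ↦ by simp only [id]; ring
  have hchi : (fun s ↦ (s + 2) * (s - 3) * chi s) =o[l] fun s ↦ s ^ 3 * chi (s + 2) :=
    (((hadd 2).isBigO.mul (hsub 3).isBigO).mul_isLittleO
      chi_isLittleO_mul_chi_add_two).congr_right fun s ↦ by simp only [id]; ring
  have hbracket := (hmain.add_isLittleO hchi_add_one.neg_left).add_isLittleO hchi.neg_left
  refine EventuallyEq.trans_isTheta (.of_forall fun s ↦ ?_)
    (((hsub 2).mul hbracket).trans_eventuallyEq (.of_forall fun s ↦ ?_))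
  · simp only [f2, Pi.add_apply, sub_eq_add_neg]
  · simp only [id, pow_succ' s 3, mul_assoc]

lemma eventually_f2_ne_zero : ∀ᶠ s in cobounded ℂ ⊓ 𝓟 {s : ℂ | 0 < s.re}, f2 s ≠ 0 := by
  filter_upwards [f2_isTheta.eq_zero_iff, mem_inf_of_right (mem_principal_self _)]
    with s hiff (hs : 0 < s.re)
  have hchi : chi (s + 2) ≠ 0 := chi_ne_zero (by simp only [add_re, re_ofNat]; linarith)
  simp [hiff, ne_zero_of_re_pos hs, hchi]

end F2

theorem f2_finitely_many_zeros_right :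
    {s : ℂ | 0 < s.re ∧ f2 s = 0}.Finite ∧
    {s : ℂ | 1 / 2 ≤ s.re ∧ f2 s = 0}.Finite := by
  have hanalytic : AnalyticOnNhd ℂ f2 Set.univ :=
    differentiable_f2.differentiableOn.analyticOnNhd isOpen_univ
  have hfinite : {s : ℂ | 0 < s.re ∧ f2 s = 0}.Finite :=
    finite_zeros_of_eventually_ne_zero hanalytic (x := 1) (by simp [f2_one]) eventually_f2_ne_zero
  exact ⟨hfinite, hfinite.subset fun s hs ↦ ⟨one_half_pos.trans_le hs.1, hs.2⟩⟩
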